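/- Under the stochastic DPD-AirComp setup holding for every round j = 0, …, k−1, assume additionally: D is a closed convex subset of [0, ∞)^N with 0 ∈ D; the dual update is λ^{j+1} = P_D[λ^j + a_j F(x^j)] with ‖F(x^j)‖ ≤ L_b a.s.; (x*, λ*) is a saddle point of L over X × D with ⟨λ*, F(x*)⟩ = 0 (so L(x*, λ*) = f_0(x*)); Z_k := Σ_{j=0}^{k−1} a_j, Ā_j := E[|A^j|], and x̂^k := (Σ_{j=0}^{k−1} a_j x^j)/Z_k. Then the expected optimality gap satisfies E[f_0(x̂^k)] − f_0(x*) ≤ (1/Z_k) ( (1/2) E[‖λ^0‖²] + E[‖x^0 − x*‖²] + (β σ² + (3/2) L_b²) Σ_{j=0}^{k−1} a_j² + R G Σ_{j=0}^{k−1} (N − Ā_j) a_j + 2 L_b G Σ_{j=0}^{k−1} (N − Ā_j) a_j² + G² Σ_{j=0}^{k−1} E[(N − |A^j|)²] a_j² ). -/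

import Mathlib

/-!
The proof is the energy argument for projected primal-dual subgradient methods, with potential
`(‖x - x*‖² + ‖λ‖²) / 2`. A projected step moves no farther from points of the convex set than the
unprojected one; applied to the primal step with the point `x*` and to the dual step with the point
`0`, this bounds `a ⟪v, x - x*⟫` and `-a ⟪λ, F x⟫` by a decrease of the potential plus an error,
where `v` is the full subgradient of the Lagrangian. Their sum controls `a (f₀ x - f₀ x*)`, because
`⟪λ, F x*⟫ ≤ ⟪λ*, F x*⟫ = 0` for every `λ ∈ D`. The potential telescopes and Jensen's inequality
passes to the weighted average.

Separating gradient and noise by `‖u + w‖² ≤ 2 (‖u‖² + ‖w‖²)` before taking expectations costs a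
factor of two, but leaves `⟪w, x - x*⟫` as the only mixed term. It has mean zero by independence,
whereas a product of noise and gradient would involve the arbitrary subgradient selections.
-/

open scoped RealInnerProductSpace
open MeasureTheory

instance {N : ℕ} : MeasurableSpace (Finset (Fin N)) := ⊤

section Projection

variable {E : Type*} [NormedAddCommGroup E] [InnerProductSpace ℝ E] {K : Set E} {p x y z : E}

/-- `p` is a point of `K` nearest to `z`. For closed convex `K` this says `p = P_K[z]`; the
relational form does not presuppose that the projection exists. -/
def IsNearestPoint (K : Set E) (z p : E) : Prop :=
  p ∈ K ∧ ∀ y ∈ K, ‖p - z‖ ≤ ‖y - z‖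

namespace IsNearestPoint

lemma inner_sub_sub_nonpos (hK : Convex ℝ K) (hp : IsNearestPoint K z p) (hy : y ∈ K) :
    ⟪z - p, y - p⟫ ≤ 0 := by
  have : Nonempty K := ⟨p, hp.1⟩
  refine (norm_eq_iInf_iff_real_inner_le_zero hK hp.1).1
    (le_antisymm (le_ciInf fun w => ?_) ?_) y hy
  · simpa only [norm_sub_rev z] using hp.2 w w.2
  · exact ciInf_le (f := fun w : K => ‖z - w‖) ⟨0, Set.forall_mem_range.2 fun _ => norm_nonneg _⟩
      ⟨p, hp.1⟩

lemma norm_sub_sq_le (hK : Convex ℝ K) (hp : IsNearestPoint K z p) (hy : y ∈ K) :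
    ‖p - y‖ ^ 2 ≤ ‖z - y‖ ^ 2 := by
  have hsplit : ‖z - y‖ ^ 2 = ‖z - p‖ ^ 2 - 2 * ⟪z - p, y - p⟫ + ‖p - y‖ ^ 2 := by
    rw [← sub_sub_sub_cancel_right z y p, norm_sub_sq_real, norm_sub_rev y p]
  linarith [hp.inner_sub_sub_nonpos hK hy, sq_nonneg ‖z - p‖]

lemma mul_inner_le {v : E} {α : ℝ} (hK : Convex ℝ K) (hp : IsNearestPoint K (x - α • v) p)
    (hy : y ∈ K) :
    α * ⟪v, x - y⟫ ≤ (‖x - y‖ ^ 2 - ‖p - y‖ ^ 2) / 2 + α ^ 2 / 2 * ‖v‖ ^ 2 := by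
  have hexpand : ‖x - α • v - y‖ ^ 2 = ‖x - y‖ ^ 2 - 2 * (α * ⟪v, x - y⟫) + α ^ 2 * ‖v‖ ^ 2 := by
    rw [sub_right_comm, norm_sub_sq_real, inner_smul_right, real_inner_comm, norm_smul, mul_pow,
      Real.norm_eq_abs, sq_abs]
  linarith [hp.norm_sub_sq_le hK hy]

lemma mul_inner_le_of_inexact {u v w : E} {α B R ε : ℝ} (hK : Convex ℝ K) (hα : 0 ≤ α)
    (hp : IsNearestPoint K (x - α • (u + w)) p) (hy : y ∈ K) (hv : ‖v‖ ≤ B) (hvu : ‖v - u‖ ≤ ε)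
    (hR : ‖x - y‖ ≤ R) :
    α * ⟪v, x - y⟫ ≤ (‖x - y‖ ^ 2 - ‖p - y‖ ^ 2) / 2 + α * (R * ε) - α * ⟪w, x - y⟫
      + α ^ 2 * ((B + ε) ^ 2 + ‖w‖ ^ 2) := by
  have hu : ‖u‖ ≤ B + ε :=
    calc ‖u‖ = ‖v - (v - u)‖ := by rw [sub_sub_cancel]
      _ ≤ ‖v‖ + ‖v - u‖ := norm_sub_le _ _
      _ ≤ B + ε := add_le_add hv hvu
  have hsq : ‖u + w‖ ^ 2 ≤ 2 * ((B + ε) ^ 2 + ‖w‖ ^ 2) :=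
    calc ‖u + w‖ ^ 2 ≤ (‖u‖ + ‖w‖) ^ 2 := by gcongr; exact norm_add_le u w
      _ ≤ 2 * (‖u‖ ^ 2 + ‖w‖ ^ 2) := add_sq_le
      _ ≤ 2 * ((B + ε) ^ 2 + ‖w‖ ^ 2) := by gcongr
  have hbias : ⟪v - u, x - y⟫ ≤ R * ε :=
    calc ⟪v - u, x - y⟫ ≤ ‖x - y‖ * ‖v - u‖ := by
          rw [mul_comm]; exact real_inner_le_norm _ _
      _ ≤ R * ε := mul_le_mul hR hvu (norm_nonneg _) ((norm_nonneg _).trans hR)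
  have hsplit : ⟪v, x - y⟫ = ⟪v - u, x - y⟫ + ⟪u + w, x - y⟫ - ⟪w, x - y⟫ := by
    rw [← inner_add_left, ← inner_sub_left]
    congr 1
    abel
  rw [hsplit]
  linarith [hp.mul_inner_le hK hy, mul_le_mul_of_nonneg_left hbias hα,
    mul_le_mul_of_nonneg_left hsq (sq_nonneg α)]

end IsNearestPoint

end Projection

section Subgradient

variable {E : Type*} [NormedAddCommGroup E] [InnerProductSpace ℝ E] {s : Set E}
  {f f' : E → ℝ} {g g' : E → E}

/-- `g` selects a subgradient of `f` at every point of `s`, where the subgradient inequality is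
required only against points of `s`. -/
def IsSubgradientOn (s : Set E) (f : E → ℝ) (g : E → E) : Prop :=
  ∀ x ∈ s, ∀ y ∈ s, f x + ⟪g x, y - x⟫ ≤ f y

namespace IsSubgradientOn

lemma sub_le_inner (h : IsSubgradientOn s f g) {x y : E} (hx : x ∈ s) (hy : y ∈ s) :
    f x - f y ≤ ⟪g x, x - y⟫ := by
  have hxy := h x hx y hy
  rw [← neg_sub x y, inner_neg_right] at hxy
  linarith

lemma convexOn (hs : Convex ℝ s) (h : IsSubgradientOn s f g) : ConvexOn ℝ s f := by
  refine ⟨hs, fun x hx y hy b c hb hc hbc => ?_⟩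
  set z := b • x + c • y with hz
  have hzs : z ∈ s := hs hx hy hb hc hbc
  have hlin : b * ⟪g z, x - z⟫ + c * ⟪g z, y - z⟫ = 0 := by
    have hcancel : b • (x - z) + c • (y - z) = 0 := by
      rw [smul_sub, smul_sub, sub_add_sub_comm, ← add_smul, hbc, one_smul, hz, sub_self]
    rw [← real_inner_smul_right, ← real_inner_smul_right, ← inner_add_right, hcancel,
      inner_zero_right]
  calc f z = b * (f z + ⟪g z, x - z⟫) + c * (f z + ⟪g z, y - z⟫) := by
        linear_combination -f z * hbc - hlin
    _ ≤ b * f x + c * f y := by gcongr <;> apply h z hzs <;> assumption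

lemma add (h : IsSubgradientOn s f g) (h' : IsSubgradientOn s f' g') :
    IsSubgradientOn s (fun x => f x + f' x) (fun x => g x + g' x) := fun x hx y hy => by
  rw [inner_add_left]
  linarith [h x hx y hy, h' x hx y hy]

lemma const_mul {c : ℝ} (hc : 0 ≤ c) (h : IsSubgradientOn s f g) :
    IsSubgradientOn s (fun x => c * f x) (fun x => c • g x) := fun x hx y hy => by
  rw [real_inner_smul_left, ← mul_add]
  exact mul_le_mul_of_nonneg_left (h x hx y hy) hc

lemma sum {ι : Type*} {t : Finset ι} {f : ι → E → ℝ} {g : ι → E → E}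
    (h : ∀ i ∈ t, IsSubgradientOn s (f i) (g i)) :
    IsSubgradientOn s (fun x => ∑ i ∈ t, f i x) (fun x => ∑ i ∈ t, g i x) := fun x hx y hy => by
  rw [sum_inner, ← Finset.sum_add_distrib]
  exact Finset.sum_le_sum fun i hi => h i hi x hx y hy

end IsSubgradientOn

end Subgradient

lemma sum_mul_map_centerMass_sub_le {ι E : Type*} [AddCommGroup E] [Module ℝ E] {s : Set E}
    {f : E → ℝ} (hf : ConvexOn ℝ s f) (c : ℝ) {t : Finset ι} {a : ι → ℝ} {x : ι → E}
    (ha : ∀ j ∈ t, 0 ≤ a j) (hpos : 0 < ∑ j ∈ t, a j) (hx : ∀ j ∈ t, x j ∈ s) :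
    (∑ j ∈ t, a j) * (f (t.centerMass a x) - c) ≤ ∑ j ∈ t, a j * (f (x j) - c) := by
  have hjensen : f (t.centerMass a x) ≤ (∑ j ∈ t, a j)⁻¹ * ∑ j ∈ t, a j * f (x j) :=
    hf.map_centerMass_le ha hpos hx
  simp only [mul_sub, Finset.sum_sub_distrib, ← Finset.sum_mul]
  gcongr
  exact (le_inv_mul_iff₀ hpos).1 hjensen

lemma sum_range_pos {a : ℕ → ℝ} {k : ℕ} (hk : 0 < k) (ha : ∀ j < k, 0 < a j) :
    0 < ∑ j ∈ Finset.range k, a j :=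
  Finset.sum_pos (fun j hj => ha j (Finset.mem_range.1 hj)) (Finset.nonempty_range_iff.2 hk.ne')

lemma real_inner_eq_sum_mul {ι : Type*} [Fintype ι] (u v : EuclideanSpace ℝ ι) :
    ⟪u, v⟫ = ∑ i, u i * v i := by
  simp only [PiLp.inner_apply, RCLike.inner_apply, conj_trivial, mul_comm]

lemma norm_sum_sub_sum_le {ι V : Type*} [Fintype ι] [SeminormedAddCommGroup V] (A : Finset ι)
    {v : ι → V} {G : ℝ} (hv : ∀ i ∉ A, ‖v i‖ ≤ G) :
    ‖∑ i, v i - ∑ i ∈ A, v i‖ ≤ (Fintype.card ι - A.card) * G := by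
  classical
  rw [← Finset.sum_add_sum_compl A v, add_sub_cancel_left]
  calc ‖∑ i ∈ Aᶜ, v i‖ ≤ ∑ _i ∈ Aᶜ, G :=
        norm_sum_le_of_le _ fun i hi => hv i (Finset.mem_compl.1 hi)
    _ = (Fintype.card ι - A.card) * G := by
        rw [Finset.sum_const, nsmul_eq_mul, Finset.card_compl, Nat.cast_sub A.card_le_univ]

section Deterministic

variable {E ι : Type*} [NormedAddCommGroup E] [InnerProductSpace ℝ E] [Fintype ι]
  {X : Set E} {D : Set (EuclideanSpace ℝ ι)} {f₀ : E → ℝ} {F : E → EuclideanSpace ℝ ι}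
  {g₀ : E → E} {g : ι → E → E} {a : ℕ → ℝ} {k : ℕ} {A : ℕ → Finset ι} {w x : ℕ → E}
  {l : ℕ → EuclideanSpace ℝ ι} {y : E} {G B R : ℝ}

/-- The Lagrangian `f₀ + ∑ i, μ i * F i` of the objective `f₀` and the constraints `F ≤ 0`. -/
noncomputable def lagrangian (f₀ : E → ℝ) (F : E → EuclideanSpace ℝ ι) (x : E)
    (μ : EuclideanSpace ℝ ι) : ℝ :=
  f₀ x + ⟪μ, F x⟫

/-- The data of a constrained convex problem solved by a primal-dual subgradient method: primal
set `X`, dual set `D` of multipliers, objective `f₀` and constraints `F` with subgradient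
selections `g₀` and `g`. Convexity of the functions on `X` is encoded by these selections. -/
structure IsPrimalDualProblem (X : Set E) (D : Set (EuclideanSpace ℝ ι)) (f₀ : E → ℝ)
    (F : E → EuclideanSpace ℝ ι) (g₀ : E → E) (g : ι → E → E) : Prop where
  convex_primal : Convex ℝ X
  convex_dual : Convex ℝ D
  nonneg_of_mem_dual : ∀ μ ∈ D, ∀ i, 0 ≤ μ i
  zero_mem_dual : 0 ∈ D
  subgradient_objective : IsSubgradientOn X f₀ g₀
  subgradient_constraint : ∀ i, IsSubgradientOn X (fun z => F z i) (g i)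

/-- `(x, l)` is a trajectory of `k` rounds of DPD-AirComp with step sizes `a`, in which only the
users in `A j` contribute to the primal step of round `j`, perturbed by the noise `w j`. -/
structure IsDPDTrajectory (X : Set E) (D : Set (EuclideanSpace ℝ ι)) (F : E → EuclideanSpace ℝ ι)
    (g₀ : E → E) (g : ι → E → E) (a : ℕ → ℝ) (k : ℕ) (A : ℕ → Finset ι) (w x : ℕ → E)
    (l : ℕ → EuclideanSpace ℝ ι) : Prop where
  primal_zero_mem : x 0 ∈ X
  dual_zero_mem : l 0 ∈ D
  primal_succ : ∀ j < k, IsNearestPoint X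
    (x j - a j • (g₀ (x j) + (∑ i ∈ A j, l j i • g i (x j)) + w j)) (x (j + 1))
  dual_succ : ∀ j < k, IsNearestPoint D (l j + a j • F (x j)) (l (j + 1))

/-- The loss of one round beyond the decrease of the potential: `α` is the step size, `m` the
number of missing users, each contributing at most `G` to the gradient, `w` the noise and `v` the
displacement of the iterate from the comparison point. -/
noncomputable def roundError (B G R α m : ℝ) (w v : E) : ℝ :=
  α * (R * (m * G)) - α * ⟪w, v⟫ + α ^ 2 * ((B + m * G) ^ 2 + ‖w‖ ^ 2) + α ^ 2 / 2 * B ^ 2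

lemma IsPrimalDualProblem.isSubgradientOn_lagrangian (prob : IsPrimalDualProblem X D f₀ F g₀ g)
    {μ : EuclideanSpace ℝ ι} (hμ : μ ∈ D) :
    IsSubgradientOn X (fun z => lagrangian f₀ F z μ) (fun z => g₀ z + ∑ i, μ i • g i z) := by
  simp only [lagrangian, real_inner_eq_sum_mul]
  exact prob.subgradient_objective.add <| .sum fun i _ =>
    (prob.subgradient_constraint i).const_mul (prob.nonneg_of_mem_dual μ hμ i)

namespace IsDPDTrajectory

lemma primal_mem (traj : IsDPDTrajectory X D F g₀ g a k A w x l) : ∀ {j}, j ≤ k → x j ∈ X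
  | 0, _ => traj.primal_zero_mem
  | j + 1, hj => (traj.primal_succ j hj).1

lemma dual_mem (traj : IsDPDTrajectory X D F g₀ g a k A w x l) : ∀ {j}, j ≤ k → l j ∈ D
  | 0, _ => traj.dual_zero_mem
  | j + 1, hj => (traj.dual_succ j hj).1

lemma primal_step_le {j : ℕ} (traj : IsDPDTrajectory X D F g₀ g a k A w x l)
    (hX : Convex ℝ X) (hj : j < k) (ha : 0 ≤ a j)
    (hG : ∀ i, ‖l j i • g i (x j)‖ ≤ G) (hB : ‖g₀ (x j) + ∑ i, l j i • g i (x j)‖ ≤ B)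
    (hy : y ∈ X) (hR : ‖x j - y‖ ≤ R) :
    a j * ⟪g₀ (x j) + ∑ i, l j i • g i (x j), x j - y⟫ ≤
      (‖x j - y‖ ^ 2 - ‖x (j + 1) - y‖ ^ 2) / 2
        + a j * (R * ((Fintype.card ι - (A j).card) * G)) - a j * ⟪w j, x j - y⟫
        + a j ^ 2 * ((B + (Fintype.card ι - (A j).card) * G) ^ 2 + ‖w j‖ ^ 2) := by
  refine (traj.primal_succ j hj).mul_inner_le_of_inexact hX ha hy hB ?_ hR
  rw [add_sub_add_left_eq_sub]
  exact norm_sum_sub_sum_le _ fun i _ => hG i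

lemma dual_step_le {j : ℕ} (traj : IsDPDTrajectory X D F g₀ g a k A w x l)
    (hD : Convex ℝ D) (hD0 : 0 ∈ D) (hj : j < k) (hF : ‖F (x j)‖ ≤ B) :
    -(a j * ⟪l j, F (x j)⟫) ≤ (‖l j‖ ^ 2 - ‖l (j + 1)‖ ^ 2) / 2 + a j ^ 2 / 2 * B ^ 2 := by
  have hproj : IsNearestPoint D (l j - a j • -F (x j)) (l (j + 1)) := by
    simpa only [smul_neg, sub_neg_eq_add] using traj.dual_succ j hj
  have hstep := hproj.mul_inner_le hD hD0
  rw [sub_zero, sub_zero, inner_neg_left, real_inner_comm, norm_neg, mul_neg] at hstep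
  exact hstep.trans (by gcongr)

lemma mul_gap_le {j : ℕ} (traj : IsDPDTrajectory X D F g₀ g a k A w x l)
    (prob : IsPrimalDualProblem X D f₀ F g₀ g) (hj : j < k) (ha : 0 ≤ a j)
    (hG : ∀ i, ‖l j i • g i (x j)‖ ≤ G) (hB : ‖g₀ (x j) + ∑ i, l j i • g i (x j)‖ ≤ B)
    (hF : ‖F (x j)‖ ≤ B) (hy : y ∈ X) (hyF : ∀ μ ∈ D, ⟪μ, F y⟫ ≤ 0) (hR : ‖x j - y‖ ≤ R) :
    a j * (f₀ (x j) - f₀ y) ≤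
      (‖x j - y‖ ^ 2 + ‖l j‖ ^ 2) / 2 - (‖x (j + 1) - y‖ ^ 2 + ‖l (j + 1)‖ ^ 2) / 2
        + roundError B G R (a j) (Fintype.card ι - (A j).card) (w j) (x j - y) := by
  have hprimal := traj.primal_step_le prob.convex_primal hj ha hG hB hy hR
  have hdual := traj.dual_step_le prob.convex_dual prob.zero_mem_dual hj hF
  have hgap : f₀ (x j) + ⟪l j, F (x j)⟫ - f₀ y ≤
      ⟪g₀ (x j) + ∑ i, l j i • g i (x j), x j - y⟫ := by
    have hlag := (prob.isSubgradientOn_lagrangian (traj.dual_mem hj.le)).sub_le_inner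
      (traj.primal_mem hj.le) hy
    simp only [lagrangian] at hlag
    linarith [hyF _ (traj.dual_mem hj.le)]
  unfold roundError
  linarith [mul_le_mul_of_nonneg_left hgap ha]

lemma sum_mul_gap_le (traj : IsDPDTrajectory X D F g₀ g a k A w x l)
    (prob : IsPrimalDualProblem X D f₀ F g₀ g) (ha : ∀ j < k, 0 ≤ a j)
    (hG : ∀ j < k, ∀ i, ‖l j i • g i (x j)‖ ≤ G)
    (hB : ∀ j < k, ‖g₀ (x j) + ∑ i, l j i • g i (x j)‖ ≤ B) (hF : ∀ j < k, ‖F (x j)‖ ≤ B)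
    (hy : y ∈ X) (hyF : ∀ μ ∈ D, ⟪μ, F y⟫ ≤ 0) (hR : ∀ z ∈ X, ‖z - y‖ ≤ R) :
    ∑ j ∈ Finset.range k, a j * (f₀ (x j) - f₀ y) ≤ (‖x 0 - y‖ ^ 2 + ‖l 0‖ ^ 2) / 2
      + ∑ j ∈ Finset.range k,
          roundError B G R (a j) (Fintype.card ι - (A j).card) (w j) (x j - y) := by
  have hrounds := Finset.sum_le_sum fun j (hj : j ∈ Finset.range k) =>
    have hjk := Finset.mem_range.1 hj
    traj.mul_gap_le prob hjk (ha j hjk) (hG j hjk) (hB j hjk) (hF j hjk) hy hyF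
      (hR _ (traj.primal_mem hjk.le))
  rw [Finset.sum_add_distrib,
    Finset.sum_range_sub' fun j => (‖x j - y‖ ^ 2 + ‖l j‖ ^ 2) / 2] at hrounds
  linarith [sq_nonneg ‖x k - y‖, sq_nonneg ‖l k‖]

lemma centerMass_gap_le (traj : IsDPDTrajectory X D F g₀ g a k A w x l)
    (prob : IsPrimalDualProblem X D f₀ F g₀ g) (hk : 0 < k) (ha : ∀ j < k, 0 < a j)
    (hG : ∀ j < k, ∀ i, ‖l j i • g i (x j)‖ ≤ G)
    (hB : ∀ j < k, ‖g₀ (x j) + ∑ i, l j i • g i (x j)‖ ≤ B) (hF : ∀ j < k, ‖F (x j)‖ ≤ B)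
    (hy : y ∈ X) (hyF : ∀ μ ∈ D, ⟪μ, F y⟫ ≤ 0) (hR : ∀ z ∈ X, ‖z - y‖ ≤ R) :
    (∑ j ∈ Finset.range k, a j) * (f₀ ((Finset.range k).centerMass a x) - f₀ y) ≤
      (‖x 0 - y‖ ^ 2 + ‖l 0‖ ^ 2) / 2 + ∑ j ∈ Finset.range k,
        roundError B G R (a j) (Fintype.card ι - (A j).card) (w j) (x j - y) := by
  have hconv : ConvexOn ℝ X f₀ := prob.subgradient_objective.convexOn prob.convex_primal
  exact (sum_mul_map_centerMass_sub_le hconv (f₀ y) (fun j hj => (ha j (Finset.mem_range.1 hj)).le)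
    (sum_range_pos hk ha) fun j hj => traj.primal_mem (Finset.mem_range.1 hj).le).trans
      (traj.sum_mul_gap_le prob (fun j hj => (ha j hj).le) hG hB hF hy hyF hR)

end IsDPDTrajectory

end Deterministic

section Stochastic

open ProbabilityTheory

variable {E Ω : Type*} [NormedAddCommGroup E] [InnerProductSpace ℝ E] [MeasurableSpace E]
  [BorelSpace E] [MeasurableSpace Ω] {P : Measure Ω}

lemma integrable_inner_of_indepFun {w v : Ω → E} (hwv : IndepFun w v P) (hw : Integrable w P)
    (hv : Integrable v P) : Integrable (fun ω => ⟪w ω, v ω⟫) P :=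
  hwv.integrable_bilin hw hv (innerSL ℝ)

lemma integral_inner_eq_zero_of_indepFun [CompleteSpace E] {w v : Ω → E} (hwv : IndepFun w v P)
    (hw : Integrable w P) (hv : Integrable v P) (hw0 : ∫ ω, w ω ∂P = 0) :
    ∫ ω, ⟪w ω, v ω⟫ ∂P = 0 :=
  calc ∫ ω, ⟪w ω, v ω⟫ ∂P = ⟪∫ ω, w ω ∂P, ∫ ω, v ω ∂P⟫ := hwv.integral_bilin hw hv (innerSL ℝ)
    _ = 0 := by rw [hw0, inner_zero_left]

variable {ι : Type*} [Fintype ι]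

lemma memLp_card_sub_card [IsFiniteMeasure P] {A : Ω → Finset ι}
    (hA : AEStronglyMeasurable (fun ω => ((A ω).card : ℝ)) P) (p : ENNReal) :
    MemLp (fun ω => (Fintype.card ι - (A ω).card : ℝ)) p P := by
  refine .of_bound (by fun_prop) (Fintype.card ι) (.of_forall fun ω => ?_)
  have hcard : ((A ω).card : ℝ) ≤ Fintype.card ι := mod_cast (A ω).card_le_univ
  rw [Real.norm_of_nonneg (sub_nonneg.2 hcard)]
  exact sub_le_self _ (Nat.cast_nonneg _)

variable {B G R α : ℝ} {m : Ω → ℝ} {w v : Ω → E}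

lemma integrable_roundError [IsFiniteMeasure P] (hm : MemLp m 2 P) (hw : MemLp w 2 P)
    (hv : Integrable v P) (hwv : IndepFun w v P) :
    Integrable (fun ω => roundError B G R α (m ω) (w ω) (v ω)) P := by
  have hm1 : Integrable m P := hm.integrable one_le_two
  have hinner := integrable_inner_of_indepFun hwv (hw.integrable one_le_two) hv
  have hgrad : Integrable (fun ω => (B + m ω * G) ^ 2) P :=
    ((memLp_const B).add (hm.mul_const G)).integrable_sq
  have hnoise : Integrable (fun ω => ‖w ω‖ ^ 2) P := hw.integrable_norm_pow two_ne_zero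
  unfold roundError
  fun_prop

variable [IsProbabilityMeasure P]

lemma integral_roundError [CompleteSpace E] (hm : MemLp m 2 P) (hw : MemLp w 2 P)
    (hw0 : ∫ ω, w ω ∂P = 0) (hv : Integrable v P) (hwv : IndepFun w v P) :
    ∫ ω, roundError B G R α (m ω) (w ω) (v ω) ∂P =
      (∫ ω, ‖w ω‖ ^ 2 ∂P + 3 / 2 * B ^ 2) * α ^ 2 + R * G * ((∫ ω, m ω ∂P) * α)
        + 2 * B * G * ((∫ ω, m ω ∂P) * α ^ 2) + G ^ 2 * ((∫ ω, m ω ^ 2 ∂P) * α ^ 2) := by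
  have hm1 : Integrable m P := hm.integrable one_le_two
  have hm2 : Integrable (fun ω => m ω ^ 2) P := hm.integrable_sq
  have hinner := integrable_inner_of_indepFun hwv (hw.integrable one_le_two) hv
  have hinner0 := integral_inner_eq_zero_of_indepFun hwv (hw.integrable one_le_two) hv hw0
  have hnoise : Integrable (fun ω => ‖w ω‖ ^ 2) P := hw.integrable_norm_pow two_ne_zero
  have hexpand : ∀ ω, roundError B G R α (m ω) (w ω) (v ω) =
      3 / 2 * B ^ 2 * α ^ 2 + (R * G * α + 2 * B * G * α ^ 2) * m ω + G ^ 2 * α ^ 2 * m ω ^ 2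
        + α ^ 2 * ‖w ω‖ ^ 2 - α * ⟪w ω, v ω⟫ := fun ω => by
    unfold roundError
    ring
  simp only [hexpand]
  rw [integral_sub (by fun_prop) (by fun_prop), integral_add (by fun_prop) (by fun_prop),
    integral_add (by fun_prop) (by fun_prop), integral_add (by fun_prop) (by fun_prop)]
  simp only [integral_const_mul, integral_const, probReal_univ, one_smul, hinner0]
  ring

lemma integral_roundError_smul_le [CompleteSpace E] {β σ M : ℝ} (hβ : 0 ≤ β) (hm : MemLp m 2 P)
    (hM : ∫ ω, m ω ∂P = M) (hw : MemLp w 2 P) (hw0 : ∫ ω, w ω ∂P = 0)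
    (hσ : ∫ ω, ‖w ω‖ ^ 2 ∂P ≤ σ ^ 2) (hv : Integrable v P) (hwv : IndepFun w v P) :
    ∫ ω, roundError B G R α (m ω) (√β • w ω) (v ω) ∂P ≤
      (β * σ ^ 2 + 3 / 2 * B ^ 2) * α ^ 2 + R * G * (M * α)
        + 2 * B * G * (M * α ^ 2) + G ^ 2 * ((∫ ω, m ω ^ 2 ∂P) * α ^ 2) := by
  have hmean : ∫ ω, √β • w ω ∂P = 0 := by rw [integral_smul, hw0, smul_zero]
  have hvar : ∫ ω, ‖√β • w ω‖ ^ 2 ∂P ≤ β * σ ^ 2 := by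
    simp only [norm_smul, mul_pow, Real.norm_eq_abs, sq_abs, Real.sq_sqrt hβ, integral_const_mul]
    gcongr
  have hindep : IndepFun (fun ω => √β • w ω) v P :=
    hwv.comp (measurable_const_smul √β) measurable_id
  subst hM
  refine (integral_roundError hm (hw.const_smul √β) hmean hv hindep).trans_le ?_
  gcongr
  exact hvar

lemma integral_sub_le_of_ae_mul_sub_le {κ : Type*} {t : Finset κ} {φ ψ : Ω → ℝ}
    {err : κ → Ω → ℝ} {e : κ → ℝ} {Z c : ℝ} (hZ : 0 < Z) (hφ : Integrable φ P)
    (hψ : Integrable ψ P) (herr : ∀ j ∈ t, Integrable (err j) P)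
    (he : ∀ j ∈ t, ∫ ω, err j ω ∂P ≤ e j)
    (h : ∀ᵐ ω ∂P, Z * (φ ω - c) ≤ ψ ω + ∑ j ∈ t, err j ω) :
    ∫ ω, φ ω ∂P - c ≤ 1 / Z * (∫ ω, ψ ω ∂P + ∑ j ∈ t, e j) := by
  rw [one_div, le_inv_mul_iff₀ hZ]
  calc Z * (∫ ω, φ ω ∂P - c) = ∫ ω, Z * (φ ω - c) ∂P := by
        rw [integral_const_mul, integral_sub hφ (integrable_const c), integral_const,
          probReal_univ, one_smul]
    _ ≤ ∫ ω, (ψ ω + ∑ j ∈ t, err j ω) ∂P :=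
        integral_mono_ae ((hφ.sub (integrable_const c)).const_mul Z)
          (hψ.add (integrable_finsetSum t herr)) h
    _ = ∫ ω, ψ ω ∂P + ∑ j ∈ t, ∫ ω, err j ω ∂P := by
        rw [integral_add hψ (integrable_finsetSum t herr), integral_finsetSum t herr]
    _ ≤ ∫ ω, ψ ω ∂P + ∑ j ∈ t, e j := by gcongr with j hj; exact he j hj

lemma integral_card_sub_card {A : Ω → Finset ι} (hA : Integrable (fun ω => ((A ω).card : ℝ)) P) :
    ∫ ω, (Fintype.card ι - (A ω).card : ℝ) ∂P = Fintype.card ι - ∫ ω, ((A ω).card : ℝ) ∂P := by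
  rw [integral_sub (integrable_const _) hA, integral_const, probReal_univ, one_smul]

theorem stmt5_general [CompleteSpace E] {X : Set E} {D : Set (EuclideanSpace ℝ ι)} {f₀ : E → ℝ}
    {F : E → EuclideanSpace ℝ ι} {g₀ : E → E} {g : ι → E → E}
    (prob : IsPrimalDualProblem X D f₀ F g₀ g)
    {k : ℕ} (hk : 0 < k) {a : ℕ → ℝ} (ha : ∀ j < k, 0 < a j)
    {β σ : ℝ} (hβ : 0 ≤ β) {x w : ℕ → Ω → E} {l : ℕ → Ω → EuclideanSpace ℝ ι}
    {A : ℕ → Ω → Finset ι}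
    (traj : ∀ᵐ ω ∂P, IsDPDTrajectory X D F g₀ g a k (A · ω) (√β • w · ω) (x · ω) (l · ω))
    (hx : ∀ j < k, AEStronglyMeasurable (x j) P)
    (hA : ∀ j < k, Integrable (fun ω => ((A j ω).card : ℝ)) P)
    (hw : ∀ j < k, MemLp (w j) 2 P) (hw0 : ∀ j < k, ∫ ω, w j ω ∂P = 0)
    (hσ : ∀ j < k, ∫ ω, ‖w j ω‖ ^ 2 ∂P ≤ σ ^ 2) (hwx : ∀ j < k, IndepFun (w j) (x j) P)
    (hG : ∀ j < k, ∀ᵐ ω ∂P, ∀ i, ‖l j ω i • g i (x j ω)‖ ≤ G)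
    (hB : ∀ j < k, ∀ᵐ ω ∂P, ‖g₀ (x j ω) + ∑ i, l j ω i • g i (x j ω)‖ ≤ B)
    (hF : ∀ j < k, ∀ᵐ ω ∂P, ‖F (x j ω)‖ ≤ B)
    {y : E} (hy : y ∈ X) (hyF : ∀ μ ∈ D, ⟪μ, F y⟫ ≤ 0) (hR : ∀ z ∈ X, ‖z - y‖ ≤ R)
    (hf₀ : Integrable (fun ω => f₀ ((Finset.range k).centerMass a (x · ω))) P)
    (hl0 : Integrable (fun ω => ‖l 0 ω‖ ^ 2) P) :
    ∫ ω, f₀ ((Finset.range k).centerMass a (x · ω)) ∂P - f₀ y ≤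
      1 / (∑ j ∈ Finset.range k, a j) *
        (1 / 2 * ∫ ω, ‖l 0 ω‖ ^ 2 ∂P + 1 / 2 * ∫ ω, ‖x 0 ω - y‖ ^ 2 ∂P
          + (β * σ ^ 2 + 3 / 2 * B ^ 2) * ∑ j ∈ Finset.range k, a j ^ 2
          + R * G * ∑ j ∈ Finset.range k, (Fintype.card ι - ∫ ω, ((A j ω).card : ℝ) ∂P) * a j
          + 2 * B * G * ∑ j ∈ Finset.range k,
              (Fintype.card ι - ∫ ω, ((A j ω).card : ℝ) ∂P) * a j ^ 2
          + G ^ 2 * ∑ j ∈ Finset.range k,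
              (∫ ω, (Fintype.card ι - (A j ω).card : ℝ) ^ 2 ∂P) * a j ^ 2) := by
  have hv : ∀ j < k, MemLp (fun ω => x j ω - y) 2 P := fun j hj =>
    .of_bound ((hx j hj).sub aestronglyMeasurable_const) R
      (traj.mono fun ω h => hR _ (h.primal_mem hj.le))
  have hv1 : ∀ j < k, Integrable (fun ω => x j ω - y) P := fun j hj =>
    (hv j hj).integrable one_le_two
  have hwv : ∀ j < k, IndepFun (w j) (fun ω => x j ω - y) P := fun j hj =>
    (hwx j hj).comp measurable_id (measurable_id.sub_const y)
  have hm : ∀ j < k, MemLp (fun ω => (Fintype.card ι - (A j ω).card : ℝ)) 2 P := fun j hj =>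
    memLp_card_sub_card (hA j hj).1 2
  have hx0 : Integrable (fun ω => ‖x 0 ω - y‖ ^ 2) P := (hv 0 hk).integrable_norm_pow two_ne_zero
  have hpotential : Integrable (fun ω => 1 / 2 * ‖l 0 ω‖ ^ 2 + 1 / 2 * ‖x 0 ω - y‖ ^ 2) P :=
    (hl0.const_mul _).add (hx0.const_mul _)
  have hpath : ∀ᵐ ω ∂P, (∑ j ∈ Finset.range k, a j)
      * (f₀ ((Finset.range k).centerMass a (x · ω)) - f₀ y) ≤
      (1 / 2 * ‖l 0 ω‖ ^ 2 + 1 / 2 * ‖x 0 ω - y‖ ^ 2) + ∑ j ∈ Finset.range k,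
        roundError B G R (a j) (Fintype.card ι - (A j ω).card) (√β • w j ω) (x j ω - y) := by
    simp only [← ae_all_iff] at hG hB hF
    filter_upwards [traj, hG, hB, hF] with ω htraj hGω hBω hFω
    linarith [htraj.centerMass_gap_le prob hk ha hGω hBω hFω hy hyF hR]
  have hgap := integral_sub_le_of_ae_mul_sub_le (sum_range_pos hk ha) hf₀ hpotential
    (fun j hj => have hj := Finset.mem_range.1 hj
      integrable_roundError (hm j hj) ((hw j hj).const_smul √β) (hv1 j hj)
        ((hwv j hj).comp (measurable_const_smul √β) measurable_id))
    (fun j hj => have hj := Finset.mem_range.1 hj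
      integral_roundError_smul_le hβ (hm j hj) (integral_card_sub_card (hA j hj)) (hw j hj)
        (hw0 j hj) (hσ j hj) (hv1 j hj) (hwv j hj))
    hpath
  rw [integral_add (hl0.const_mul _) (hx0.const_mul _), integral_const_mul, integral_const_mul]
    at hgap
  simpa only [Finset.sum_add_distrib, ← Finset.mul_sum, add_assoc] using hgap

end Stochastic

/-- Theorem 2 of the paper: expected upper bound on the
optimality gap of the running weighted average under the stochastic
DPD-AirComp setup. -/
theorem stmt5 {d n : ℕ}
    {Ω : Type*} [MeasurableSpace Ω] (P : Measure Ω) [IsProbabilityMeasure P]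
    -- the sets X and D
    (X : Set (EuclideanSpace ℝ (Fin d)))
    (hXne : X.Nonempty) (hXcp : IsCompact X) (hXcv : Convex ℝ X)
    (Dset : Set (EuclideanSpace ℝ (Fin n)))
    (hDcl : IsClosed Dset) (hDcv : Convex ℝ Dset)
    (hDpos : ∀ μ ∈ Dset, ∀ i, 0 ≤ μ i)
    (hD0 : (0 : EuclideanSpace ℝ (Fin n)) ∈ Dset)
    -- convex objective and constraint functions, the Lagrangian and F
    (f0 : EuclideanSpace ℝ (Fin d) → ℝ)
    (f : Fin n → EuclideanSpace ℝ (Fin d) → ℝ)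
    (hf0 : ConvexOn ℝ Set.univ f0) (hf : ∀ i, ConvexOn ℝ Set.univ (f i))
    (L : EuclideanSpace ℝ (Fin d) → EuclideanSpace ℝ (Fin n) → ℝ)
    (hL : ∀ y μ, L y μ = f0 y + ∑ i, μ i * f i y)
    (F : EuclideanSpace ℝ (Fin d) → EuclideanSpace ℝ (Fin n))
    (hF : ∀ y i, F y i = f i y)
    -- fixed subgradients of f_0 and of each f_i
    (g0 : EuclideanSpace ℝ (Fin d) → EuclideanSpace ℝ (Fin d))
    (g : Fin n → EuclideanSpace ℝ (Fin d) → EuclideanSpace ℝ (Fin d))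
    (hg0 : ∀ x y, f0 x + ⟪g0 x, y - x⟫ ≤ f0 y)
    (hg : ∀ i x y, f i x + ⟪g i x, y - x⟫ ≤ f i y)
    -- constants and the number of rounds
    (k : ℕ) (hk : 0 < k)
    (a : ℕ → ℝ) (ha : ∀ j, 0 < a j)
    (β σ G Lb R : ℝ) (hβ : 0 < β)
    -- the random processes
    (x : ℕ → Ω → EuclideanSpace ℝ (Fin d))
    (l : ℕ → Ω → EuclideanSpace ℝ (Fin n))
    (A : ℕ → Ω → Finset (Fin n))
    (nois : ℕ → Ω → EuclideanSpace ℝ (Fin d))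
    (hxX : ∀ j ω, x j ω ∈ X) (hlD : ∀ j ω, l j ω ∈ Dset)
    (hmx : ∀ j, Measurable (x j)) (hml : ∀ j, Measurable (l j))
    (hmA : ∀ j, Measurable (A j)) (hmn : ∀ j, Measurable (nois j))
    -- for each round j < k : noise independent of (x^j, λ^j, A^j), zero mean,
    -- variance σ², and the projected primal update
    (hindep : ∀ j < k,
      ProbabilityTheory.IndepFun (nois j) (fun ω => (x j ω, l j ω, A j ω)) P)
    (hn0 : ∀ j < k, ∫ ω, nois j ω ∂P = 0)
    (hnvar : ∀ j < k, ∫ ω, ‖nois j ω‖ ^ 2 ∂P = σ ^ 2)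
    (hnint : ∀ j < k, Integrable (nois j) P)
    (hnsq : ∀ j < k, Integrable (fun ω => ‖nois j ω‖ ^ 2) P)
    (hupd : ∀ j < k, ∀ ω, x (j + 1) ω ∈ X ∧ ∀ y ∈ X,
      ‖x (j + 1) ω - (x j ω - a j • (g0 (x j ω)
          + (∑ i ∈ A j ω, l j ω i • g i (x j ω)) + Real.sqrt β • nois j ω))‖
        ≤ ‖y - (x j ω - a j • (g0 (x j ω)
          + (∑ i ∈ A j ω, l j ω i • g i (x j ω)) + Real.sqrt β • nois j ω))‖)
    -- the projected dual update λ^{j+1} = P_D[λ^j + a_j F(x^j)]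
    (hdual : ∀ j < k, ∀ ω, l (j + 1) ω ∈ Dset ∧ ∀ μ ∈ Dset,
      ‖l (j + 1) ω - (l j ω + a j • F (x j ω))‖ ≤ ‖μ - (l j ω + a j • F (x j ω))‖)
    -- a.s. bounds
    (hG : ∀ j < k, ∀ᵐ ω ∂P, ∀ i, ‖l j ω i • g i (x j ω)‖ ≤ G)
    (hLb : ∀ j < k, ∀ᵐ ω ∂P, ‖g0 (x j ω) + ∑ i, l j ω i • g i (x j ω)‖ ≤ Lb)
    (hFb : ∀ j < k, ∀ᵐ ω ∂P, ‖F (x j ω)‖ ≤ Lb)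
    -- saddle point (x*, λ*) of L over X × D with ⟨λ*, F(x*)⟩ = 0
    (xstar : EuclideanSpace ℝ (Fin d)) (hxstarX : xstar ∈ X)
    (lamstar : EuclideanSpace ℝ (Fin n)) (hlamstarD : lamstar ∈ Dset)
    (hsaddle : ∀ y ∈ X, ∀ μ ∈ Dset,
      L xstar μ ≤ L xstar lamstar ∧ L xstar lamstar ≤ L y lamstar)
    (hcomp : ⟪lamstar, F xstar⟫ = 0)
    (hR : ∀ y ∈ X, ‖y - xstar‖ ≤ R)
    -- abbreviations Z_k, Ā_j and the running weighted average x̂^k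
    (Z : ℝ) (hZ : Z = ∑ j ∈ Finset.range k, a j)
    (Abar : ℕ → ℝ) (hAbar : ∀ j, Abar j = ∫ ω, ((A j ω).card : ℝ) ∂P)
    (xhat : Ω → EuclideanSpace ℝ (Fin d))
    (hxhat : ∀ ω, xhat ω = Z⁻¹ • ∑ j ∈ Finset.range k, a j • x j ω)
    -- integrability of the quantities appearing in the bound
    (hint0 : Integrable (fun ω => f0 (xhat ω)) P)
    (hintlam : Integrable (fun ω => ‖l 0 ω‖ ^ 2) P)
    (hint1 : ∀ j < k, Integrable (fun ω => ‖x j ω - xstar‖ ^ 2) P)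
    (hint2 : ∀ j < k, Integrable (fun ω => L (x j ω) (l j ω)) P)
    (hint3 : ∀ j < k, Integrable (fun ω => L xstar (l j ω)) P)
    (hint4 : ∀ j < k, Integrable (fun ω => ((A j ω).card : ℝ)) P)
    (hint5 : ∀ j < k, Integrable (fun ω => ((n : ℝ) - (A j ω).card) ^ 2) P) :
    (∫ ω, f0 (xhat ω) ∂P) - f0 xstar ≤
      (1 / Z) *
        ((1 / 2) * (∫ ω, ‖l 0 ω‖ ^ 2 ∂P)
          + (∫ ω, ‖x 0 ω - xstar‖ ^ 2 ∂P)
          + (β * σ ^ 2 + (3 / 2) * Lb ^ 2) * ∑ j ∈ Finset.range k, (a j) ^ 2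
          + R * G * ∑ j ∈ Finset.range k, ((n : ℝ) - Abar j) * a j
          + 2 * Lb * G * ∑ j ∈ Finset.range k, ((n : ℝ) - Abar j) * (a j) ^ 2
          + G ^ 2 * ∑ j ∈ Finset.range k,
              (∫ ω, ((n : ℝ) - (A j ω).card) ^ 2 ∂P) * (a j) ^ 2) := by
  subst hZ
  obtain rfl : L = lagrangian f0 F := by
    ext y μ
    simp only [hL, lagrangian, real_inner_eq_sum_mul, hF]
  have prob : IsPrimalDualProblem X Dset f0 F g0 g :=
    ⟨hXcv, hDcv, hDpos, hD0, fun x _ y _ => hg0 x y, fun i x _ y _ => by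
      simpa only [hF] using hg i x y⟩
  have hxstar : ∀ μ ∈ Dset, ⟪μ, F xstar⟫ ≤ 0 := fun μ hμ => by
    simpa only [lagrangian, hcomp, add_le_add_iff_left] using (hsaddle xstar hxstarX μ hμ).1
  obtain rfl : xhat = fun ω => (Finset.range k).centerMass a (x · ω) := funext hxhat
  have hgap := stmt5_general prob hk (fun j _ => ha j) hβ.le
    (.of_forall fun ω => ⟨hxX 0 ω, hlD 0 ω, fun j hj => hupd j hj ω, fun j hj => hdual j hj ω⟩)
    (fun j _ => (hmx j).aestronglyMeasurable) hint4
    (fun j hj => (memLp_two_iff_integrable_sq_norm (hnint j hj).1).2 (hnsq j hj)) hn0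
    (fun j hj => (hnvar j hj).le) (fun j hj => (hindep j hj).comp measurable_id measurable_fst)
    hG hLb hFb hxstarX hxstar hR hint0 hintlam
  simp only [Fintype.card_fin, ← hAbar] at hgap
  have hx0 : 0 ≤ ∫ ω, ‖x 0 ω - xstar‖ ^ 2 ∂P := integral_nonneg fun ω => sq_nonneg _
  have hZ : 0 ≤ ∑ j ∈ Finset.range k, a j := Finset.sum_nonneg fun j _ => (ha j).le
  refine hgap.trans ?_
  gcongr
  linarith
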